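/- If σ is a proper twist on G, then for all p,q ∈ G: σ(p,q)·σ((pq)⁻¹, pq) = σ(q⁻¹,q)·σ(p⁻¹,p)·σ(q⁻¹,p⁻¹). -/

import Mathlib

/-!
In the twisted group algebra, `i_p * i_q = σ p q • i_(pq)` and `i_p` has conjugate
`σ p⁻¹ p • i_(p⁻¹)`, so the identity compares the coefficients of `(i_p * i_q)*` and `i_q* * i_p*`.
Write `σ p q` as `σ (pq) q⁻¹ * σ q⁻¹ q`. By left properness, `σ (pq)⁻¹ (pq)` turns the first factor
into `σ (pq)⁻¹ p`, and by right properness this is `σ q⁻¹ p⁻¹ * σ p⁻¹ p`.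
-/

/-- A proper twist on a group `G`. The values are taken in an arbitrary type with multiplication
instead of `{-1, 1}`, with the factors of each product in the order of the two identities that
define properness. -/
structure IsProperTwist {G M : Type*} [Group G] [Mul M] (σ : G → G → M) : Prop where
  mul_self_inv (p q : G) : σ p q * σ q q⁻¹ = σ (p * q) q⁻¹
  inv_self_mul (p q : G) : σ p⁻¹ p * σ p q = σ p⁻¹ (p * q)

namespace IsProperTwist

variable {G M : Type*} [Group G]

section Mul

variable [Mul M] {σ : G → G → M}

theorem mul_inv_mul_inv_self (hσ : IsProperTwist σ) (p q : G) :
    σ (p * q) q⁻¹ * σ q⁻¹ q = σ p q := by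
  simpa only [inv_inv, mul_inv_cancel_right] using hσ.mul_self_inv (p * q) q⁻¹

theorem inv_inv_mul_inv_self (hσ : IsProperTwist σ) (p q : G) :
    σ q⁻¹ p⁻¹ * σ p⁻¹ p = σ (p * q)⁻¹ p := by
  simpa only [inv_inv, mul_inv_rev] using hσ.mul_self_inv q⁻¹ p⁻¹

theorem inv_self_mul_mul_inv (hσ : IsProperTwist σ) (p q : G) :
    σ (p * q)⁻¹ (p * q) * σ (p * q) q⁻¹ = σ (p * q)⁻¹ p := by
  simpa only [mul_inv_cancel_right] using hσ.inv_self_mul (p * q) q⁻¹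

end Mul

theorem inv_mul_self_mul [Semigroup M] {σ : G → G → M} (hσ : IsProperTwist σ) (p q : G) :
    σ (p * q)⁻¹ (p * q) * σ p q = σ q⁻¹ p⁻¹ * σ p⁻¹ p * σ q⁻¹ q :=
  calc
    σ (p * q)⁻¹ (p * q) * σ p q
        = σ (p * q)⁻¹ (p * q) * σ (p * q) q⁻¹ * σ q⁻¹ q := by
      rw [mul_assoc, hσ.mul_inv_mul_inv_self]
    _ = σ (p * q)⁻¹ p * σ q⁻¹ q := by rw [hσ.inv_self_mul_mul_inv]
    _ = σ q⁻¹ p⁻¹ * σ p⁻¹ p * σ q⁻¹ q := by rw [hσ.inv_inv_mul_inv_self]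

end IsProperTwist

theorem stmt4_general {G M : Type*} [Group G] [CommSemigroup M] {σ : G → G → M}
    (hσ : IsProperTwist σ) (p q : G) :
    σ p q * σ (p * q)⁻¹ (p * q) = σ q⁻¹ q * σ p⁻¹ p * σ q⁻¹ p⁻¹ := by
  rw [mul_comm (σ p q), hσ.inv_mul_self_mul]
  ac_rfl

theorem stmt4 {G : Type*} [Group G] (σ : G → G → ℤ)
    (hval : ∀ p q, σ p q = 1 ∨ σ p q = -1)
    (hproper : ∀ p q : G, σ p q * σ q q⁻¹ = σ (p * q) q⁻¹ ∧ σ p⁻¹ p * σ p q = σ p⁻¹ (p * q)) :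
    ∀ p q : G, σ p q * σ (p * q)⁻¹ (p * q) = σ q⁻¹ q * σ p⁻¹ p * σ q⁻¹ p⁻¹ :=
  stmt4_general ⟨fun p q => (hproper p q).1, fun p q => (hproper p q).2⟩
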